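/- arXiv:2502.03184 — 3 statements merged into one kernel-verified Lean document; each statement's English description precedes it below -/
import Mathlib

section
/- Let ℓ ∈ ℂ with ℓ ≠ 0 and ℓ ≠ 1, and let I be the T-ideal of ℂ⟨X⟩ generated by the three polynomials (x₁x₂)x₃ − (x₁x₃)x₂, (x₁,x₂,x₃) − (x₂,x₁,x₃), and (x₁,x₂,x₃) − (x₁,x₃,x₂) − ℓ·[x₃,x₂]x₁. Then the following four polynomials belong to I: (i) ([x₁,x₂],x₃,x₄); (ii) (x₁x₂,x₃,x₄) − (x₁,x₃,x₄)x₂; (iii) (x₁,x₂,x₃)x₄ − (x₄,x₂,x₃)x₁; (iv) x₁(x₂,x₃,x₄) − ℓ·(x₂,x₃,x₄)x₁. -/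
/-!
A polynomial lies in the T-ideal generated by `S` as soon as it is an identity of every algebra
satisfying all the identities in `S`: test it on the quotients of `ℂ⟨X⟩` by T-ideals. It remains
to compute in an algebra with `(xy)z = (xz)y`, `(x, y, z) = (y, x, z)` and
`(x, y, z) - (x, z, y) = ℓ[z, y]x`. Right commutativity turns the last identity into
`x[y, z] = ℓ[y, z]x`, so that right commutativity again gives `ℓ([a, b], c, d) = 0`. Right
commutativity also gives `(ab, c, d) = (a, c, d)b`; the left side is symmetric in `a` and `b` by
the previous relation, whence (iii). Finally (iv) is the Teichmüller identity
`a(b, c, d) = (ab, c, d) - (a, bc, d) + (a, b, cd) - (a, b, c)d` with each term on the right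
rewritten by the preceding relations.
-/

noncomputable section

/-- The free nonassociative non-unital `ℂ`-algebra `ℂ⟨X⟩` on the countably
infinite set of free generators `X = {x₀, x₁, x₂, …}` indexed by `ℕ`. -/
abbrev FreeA : Type := FreeNonUnitalNonAssocAlgebra ℂ ℕ

/-- The free generator (variable) `xᵢ`. -/
def xv (i : ℕ) : FreeA := FreeNonUnitalNonAssocAlgebra.of ℂ i

/-- The set `Id(A)` of all polynomial identities of a (possibly nonassociative,
non-unital) `ℂ`-algebra `A`: those `f ∈ ℂ⟨X⟩` that vanish under every
substitution of elements of `A` for the variables. -/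
def IdSet (A : Type) [NonUnitalNonAssocSemiring A] [Module ℂ A]
    [IsScalarTower ℂ A A] [SMulCommClass ℂ A A] : Set FreeA :=
  {f | ∀ a : ℕ → A, FreeNonUnitalNonAssocAlgebra.lift ℂ a f = 0}

/-- A T-ideal: a two-sided ideal of `ℂ⟨X⟩` (closed under addition, scalar
multiples and multiplication by arbitrary elements on either side) that is
stable under all `ℂ`-algebra endomorphisms of `ℂ⟨X⟩`. -/
def IsTIdeal (I : Set FreeA) : Prop :=
  (0 : FreeA) ∈ I ∧
  (∀ f g : FreeA, f ∈ I → g ∈ I → f + g ∈ I) ∧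
  (∀ (c : ℂ) (f : FreeA), f ∈ I → c • f ∈ I) ∧
  (∀ f g : FreeA, f ∈ I → f * g ∈ I) ∧
  (∀ f g : FreeA, f ∈ I → g * f ∈ I) ∧
  (∀ (φ : FreeA →ₙₐ[ℂ] FreeA) (f : FreeA), f ∈ I → φ f ∈ I)

/-- The T-ideal generated by a set `S`: the smallest T-ideal containing `S`. -/
def TIdealGen (S : Set FreeA) : Set FreeA := ⋂₀ {I : Set FreeA | IsTIdeal I ∧ S ⊆ I}

/-- the commutator `[f, g] = fg - gf`. -/
def brk (f g : FreeA) : FreeA := f * g - g * f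

/-- the associator `(f, g, h) = (fg)h - f(gh)`. -/
def assocP (f g h : FreeA) : FreeA := (f * g) * h - f * (g * h)

theorem associator_mul_left_of_right_comm {A : Type*} [NonUnitalNonAssocRing A]
    (right_comm : ∀ x y z : A, x * y * z = x * z * y) (a b c d : A) :
    associator (a * b) c d = associator a c d * b := by
  rw [associator_apply, associator_apply, sub_mul, right_comm a b c, right_comm (a * c) b d,
    right_comm a b (c * d)]

theorem lie_mul_mul_add_lie_mul_mul_of_right_comm {A : Type*} [NonUnitalNonAssocRing A]
    (right_comm : ∀ x y z : A, x * y * z = x * z * y) (a b c d : A) :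
    ⁅b, c⁆ * a * d + ⁅c * d, b⁆ * a = associator b c d * a := by
  rw [right_comm ⁅b, c⁆ a d, ← add_mul, Ring.lie_def, Ring.lie_def, sub_mul, right_comm c d b,
    sub_add_sub_cancel, associator_apply]

/-- Membership of an algebra in the variety defined by the three generating identities, with
parameter `l`. -/
structure IsN6Algebra {k : Type*} (l : k) (A : Type*) [NonUnitalNonAssocRing A] [SMul k A] :
    Prop where
  right_comm : ∀ x y z : A, x * y * z = x * z * y
  associator_left_comm : ∀ x y z : A, associator x y z = associator y x z
  associator_sub_associator : ∀ x y z : A,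
    associator x y z - associator x z y = l • (⁅z, y⁆ * x)

namespace IsN6Algebra

variable {k A : Type*} [NonUnitalNonAssocRing A] [DistribSMul k A] {l : k}

theorem mul_lie (h : IsN6Algebra l A) (x y z : A) : x * ⁅y, z⁆ = l • (⁅y, z⁆ * x) := by
  rw [← h.associator_sub_associator, associator_apply, associator_apply, h.right_comm x z y,
    Ring.lie_def, mul_sub, sub_sub_sub_cancel_left]

theorem associator_lie_left [IsScalarTower k A A] (h : IsN6Algebra l A) (hl : IsSMulRegular A l)
    (a b c d : A) : associator ⁅a, b⁆ c d = 0 := by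
  refine hl.right_eq_zero_of_smul ?_
  calc
    l • associator ⁅a, b⁆ c d = l • (⁅a, b⁆ * c) * d - l • (⁅a, b⁆ * (c * d)) := by
      rw [associator_apply, smul_sub, smul_mul_assoc]
    _ = c * ⁅a, b⁆ * d - c * d * ⁅a, b⁆ := by rw [← h.mul_lie, ← h.mul_lie]
    _ = 0 := by rw [h.right_comm, sub_self]

theorem associator_mul_swap [IsScalarTower k A A] (h : IsN6Algebra l A) (hl : IsSMulRegular A l)
    (a b c d : A) : associator a b c * d = associator d b c * a := by
  have swap : associator (a * d) b c = associator (d * a) b c := by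
    simpa only [Ring.lie_def, associator_apply, sub_mul, sub_sub_sub_comm, sub_eq_zero] using
      h.associator_lie_left hl a d b c
  rwa [associator_mul_left_of_right_comm h.right_comm,
    associator_mul_left_of_right_comm h.right_comm] at swap

theorem mul_associator [IsScalarTower k A A] (h : IsN6Algebra l A) (hl : IsSMulRegular A l)
    (a b c d : A) : a * associator b c d = l • (associator b c d * a) := by
  have mul_left := associator_mul_left_of_right_comm h.right_comm
  have mid : associator a (b * c) d = associator a b d * c := by
    rw [h.associator_left_comm, mul_left, h.associator_left_comm]
  have right : associator a b (c * d) = associator a c b * d + l • (⁅c * d, b⁆ * a) := by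
    rw [← h.associator_sub_associator, h.associator_left_comm a (c * d), mul_left,
      h.associator_left_comm c a, add_sub_cancel]
  have cancel : associator a c d * b = associator a b d * c := by
    rw [h.associator_mul_swap hl, h.associator_left_comm, h.associator_mul_swap hl c b d a,
      h.associator_mul_swap hl]
  calc
    a * associator b c d = associator (a * b) c d - associator a (b * c) d
        + associator a b (c * d) - associator a b c * d := by
      rw [← sub_eq_zero, ← associator_cocycle a b c d]
      abel
    _ = (associator a c b - associator a b c) * d + l • (⁅c * d, b⁆ * a) := by
      rw [mul_left, mid, right, cancel, sub_mul]
      abel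
    _ = l • (⁅b, c⁆ * a * d + ⁅c * d, b⁆ * a) := by
      rw [h.associator_sub_associator, smul_mul_assoc, smul_add]
    _ = l • (associator b c d * a) := by
      rw [lie_mul_mul_add_lie_mul_mul_of_right_comm h.right_comm]

end IsN6Algebra

/-- A two-sided ideal of a nonassociative non-unital `k`-algebra: a submodule absorbing
multiplication on both sides. Without a unit, closure under scalars is not automatic. -/
structure AlgebraIdeal (k A : Type*) [CommRing k] [NonUnitalNonAssocRing A] [Module k A]
    extends Submodule k A where
  mul_mem_left : ∀ (x : A) {y : A}, y ∈ carrier → x * y ∈ carrier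
  mul_mem_right : ∀ {x : A} (y : A), x ∈ carrier → x * y ∈ carrier

namespace AlgebraIdeal

variable {k A : Type*} [CommRing k] [NonUnitalNonAssocRing A] [Module k A]

/-- The quotient of an algebra by a two-sided ideal. -/
abbrev Quotient (I : AlgebraIdeal k A) : Type _ := A ⧸ I.toSubmodule

variable [IsScalarTower k A A] [SMulCommClass k A A] (I : AlgebraIdeal k A)

/-- The multiplication of `A`, descended to the quotient by a two-sided ideal as a bilinear map. -/
def quotientMul : I.Quotient →ₗ[k] I.Quotient →ₗ[k] I.Quotient :=
  I.toSubmodule.liftQ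
    (I.toSubmodule.mapQLinear I.toSubmodule ∘ₗ
      (LinearMap.mul k A).codRestrict (I.toSubmodule.compatibleMaps I.toSubmodule)
        fun x _ ↦ I.mul_mem_left x)
    fun _ hx ↦ LinearMap.mem_ker.2 <| Submodule.linearMap_qext _ <| LinearMap.ext fun y ↦
      (Submodule.Quotient.mk_eq_zero _).2 (I.mul_mem_right y hx)

instance : NonUnitalNonAssocRing I.Quotient where
  mul x y := I.quotientMul x y
  left_distrib x := map_add (I.quotientMul x)
  right_distrib := I.quotientMul.map_add₂
  zero_mul := I.quotientMul.map_zero₂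
  mul_zero x := map_zero (I.quotientMul x)

instance : IsScalarTower k I.Quotient I.Quotient := ⟨I.quotientMul.map_smul₂⟩

instance : SMulCommClass k I.Quotient I.Quotient :=
  ⟨fun c x y ↦ ((I.quotientMul x).map_smul c y).symm⟩

/-- The quotient map of a two-sided ideal, as an algebra homomorphism. -/
def mkHom : A →ₙₐ[k] I.Quotient where
  __ := I.toSubmodule.mkQ
  map_zero' := map_zero I.toSubmodule.mkQ
  map_mul' _ _ := rfl

theorem mkHom_surjective : Function.Surjective I.mkHom := I.toSubmodule.mkQ_surjective

theorem mkHom_eq_zero {x : A} : I.mkHom x = 0 ↔ x ∈ I.toSubmodule :=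
  Submodule.Quotient.mk_eq_zero I.toSubmodule

end AlgebraIdeal

namespace IsTIdeal

variable {I : Set FreeA}

/-- The two-sided ideal underlying a T-ideal. -/
def toAlgebraIdeal (hI : IsTIdeal I) : AlgebraIdeal ℂ FreeA where
  carrier := I
  zero_mem' := hI.1
  add_mem' := hI.2.1 _ _
  smul_mem' := hI.2.2.1
  mul_mem_left _ _ hy := hI.2.2.2.2.1 _ _ hy
  mul_mem_right _ hx := hI.2.2.2.1 _ _ hx

theorem IdSet_quotient (hI : IsTIdeal I) : IdSet hI.toAlgebraIdeal.Quotient = I := by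
  have map_mem := hI.2.2.2.2.2
  let π := hI.toAlgebraIdeal.mkHom
  have π_eq_zero {f : FreeA} : π f = 0 ↔ f ∈ I := hI.toAlgebraIdeal.mkHom_eq_zero
  refine Set.Subset.antisymm (fun f hf ↦ ?_) fun f hf v ↦ ?_
  · have := hf (π ∘ FreeNonUnitalNonAssocAlgebra.of ℂ)
    rwa [FreeNonUnitalNonAssocAlgebra.lift_comp_of, π_eq_zero] at this
  · obtain ⟨w, rfl⟩ := hI.toAlgebraIdeal.mkHom_surjective.comp_left v
    have lift_eq : FreeNonUnitalNonAssocAlgebra.lift ℂ (π ∘ w) =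
        π.comp (FreeNonUnitalNonAssocAlgebra.lift ℂ w) :=
      FreeNonUnitalNonAssocAlgebra.hom_ext ℂ fun i ↦ by
        simp only [Function.comp_apply, NonUnitalAlgHom.comp_apply,
          FreeNonUnitalNonAssocAlgebra.lift_of_apply]
    rw [lift_eq, NonUnitalAlgHom.comp_apply, π_eq_zero]
    exact map_mem _ f hf

end IsTIdeal

theorem mem_TIdealGen_of_forall_mem_IdSet {S : Set FreeA} {f : FreeA}
    (hf : ∀ (A : Type) [NonUnitalNonAssocRing A] [Module ℂ A] [IsScalarTower ℂ A A]
      [SMulCommClass ℂ A A], S ⊆ IdSet A → f ∈ IdSet A) : f ∈ TIdealGen S := by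
  rintro I ⟨hI, hSI⟩
  rw [← hI.IdSet_quotient] at hSI ⊢
  exact hf _ hSI

/-- The three polynomials generating the T-ideal, with parameter `l`. -/
def n6Generators (l : ℂ) : Set FreeA :=
  { (xv 1 * xv 2) * xv 3 - (xv 1 * xv 3) * xv 2,
    assocP (xv 1) (xv 2) (xv 3) - assocP (xv 2) (xv 1) (xv 3),
    assocP (xv 1) (xv 2) (xv 3) - assocP (xv 1) (xv 3) (xv 2) - l • (brk (xv 3) (xv 2) * xv 1) }

section Evaluation

variable {A : Type} [NonUnitalNonAssocRing A] [Module ℂ A]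

theorem map_assocP (φ : FreeA →ₙₐ[ℂ] A) (f g h : FreeA) :
    φ (assocP f g h) = associator (φ f) (φ g) (φ h) := by
  simp only [assocP, associator_apply, map_sub, map_mul]

theorem map_brk (φ : FreeA →ₙₐ[ℂ] A) (f g : FreeA) : φ (brk f g) = ⁅φ f, φ g⁆ := by
  simp only [brk, Ring.lie_def, map_sub, map_mul]

variable [IsScalarTower ℂ A A] [SMulCommClass ℂ A A]

theorem lift_xv (v : ℕ → A) (i : ℕ) : FreeNonUnitalNonAssocAlgebra.lift ℂ v (xv i) = v i :=
  FreeNonUnitalNonAssocAlgebra.lift_of_apply ℂ v i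

theorem IsN6Algebra.of_subset_IdSet {l : ℂ} (hA : n6Generators l ⊆ IdSet A) :
    IsN6Algebra l A := by
  let v (x y z : A) : ℕ → A
    | 1 => x
    | 2 => y
    | _ => z
  refine ⟨fun x y z ↦ sub_eq_zero.1 ?_, fun x y z ↦ sub_eq_zero.1 ?_,
    fun x y z ↦ sub_eq_zero.1 ?_⟩
  · simpa only [map_sub, map_mul, lift_xv, v] using hA (.inl rfl) (v x y z)
  · simpa only [map_sub, map_assocP, lift_xv, v] using hA (.inr (.inl rfl)) (v x y z)
  · simpa only [map_sub, map_smul, map_mul, map_assocP, map_brk, lift_xv, v] using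
      hA (.inr (.inr rfl)) (v x y z)

end Evaluation

theorem mem_TIdealGen_n6Generators {l : ℂ} {f : FreeA}
    (hf : ∀ (A : Type) [NonUnitalNonAssocRing A] [Module ℂ A] [IsScalarTower ℂ A A]
      [SMulCommClass ℂ A A], IsN6Algebra l A → ∀ φ : FreeA →ₙₐ[ℂ] A, φ f = 0) :
    f ∈ TIdealGen (n6Generators l) :=
  mem_TIdealGen_of_forall_mem_IdSet fun A _ _ _ _ hA _ ↦ hf A (.of_subset_IdSet hA) _

theorem N6_consequences_general {l : ℂ} (hl : l ≠ 0) (a b c d : FreeA) :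
    assocP (brk a b) c d ∈ TIdealGen (n6Generators l) ∧
    assocP (a * b) c d - assocP a c d * b ∈ TIdealGen (n6Generators l) ∧
    assocP a b c * d - assocP d b c * a ∈ TIdealGen (n6Generators l) ∧
    a * assocP b c d - l • (assocP b c d * a) ∈ TIdealGen (n6Generators l) := by
  refine ⟨?_, ?_, ?_, ?_⟩ <;> refine mem_TIdealGen_n6Generators fun A _ _ _ _ h φ ↦ ?_ <;>
    simp only [map_sub, map_smul, map_mul, map_assocP, map_brk]
  · exact h.associator_lie_left (.of_ne_zero hl) _ _ _ _
  · exact sub_eq_zero.2 (associator_mul_left_of_right_comm h.right_comm _ _ _ _)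
  · exact sub_eq_zero.2 (h.associator_mul_swap (.of_ne_zero hl) _ _ _ _)
  · exact sub_eq_zero.2 (h.mul_associator (.of_ne_zero hl) _ _ _ _)

/-- For every `ℓ ∈ ℂ \\ {0, 1}`, the four polynomials `([x₁,x₂],x₃,x₄)`,
`(x₁x₂,x₃,x₄) - (x₁,x₃,x₄)x₂`, `(x₁,x₂,x₃)x₄ - (x₄,x₂,x₃)x₁` and
`x₁(x₂,x₃,x₄) - ℓ·(x₂,x₃,x₄)x₁` lie in the T-ideal generated by
`(x₁x₂)x₃ - (x₁x₃)x₂`, `(x₁,x₂,x₃) - (x₂,x₁,x₃)` and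
`(x₁,x₂,x₃) - (x₁,x₃,x₂) - ℓ·[x₃,x₂]x₁`. -/
theorem N6_consequences (l : ℂ) (h0 : l ≠ 0) (h1 : l ≠ 1) :
    assocP (brk (xv 1) (xv 2)) (xv 3) (xv 4) ∈
      TIdealGen { (xv 1 * xv 2) * xv 3 - (xv 1 * xv 3) * xv 2,
        assocP (xv 1) (xv 2) (xv 3) - assocP (xv 2) (xv 1) (xv 3),
        assocP (xv 1) (xv 2) (xv 3) - assocP (xv 1) (xv 3) (xv 2) -
          l • (brk (xv 3) (xv 2) * xv 1) } ∧
    assocP (xv 1 * xv 2) (xv 3) (xv 4) - assocP (xv 1) (xv 3) (xv 4) * xv 2 ∈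
      TIdealGen { (xv 1 * xv 2) * xv 3 - (xv 1 * xv 3) * xv 2,
        assocP (xv 1) (xv 2) (xv 3) - assocP (xv 2) (xv 1) (xv 3),
        assocP (xv 1) (xv 2) (xv 3) - assocP (xv 1) (xv 3) (xv 2) -
          l • (brk (xv 3) (xv 2) * xv 1) } ∧
    assocP (xv 1) (xv 2) (xv 3) * xv 4 - assocP (xv 4) (xv 2) (xv 3) * xv 1 ∈
      TIdealGen { (xv 1 * xv 2) * xv 3 - (xv 1 * xv 3) * xv 2,
        assocP (xv 1) (xv 2) (xv 3) - assocP (xv 2) (xv 1) (xv 3),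
        assocP (xv 1) (xv 2) (xv 3) - assocP (xv 1) (xv 3) (xv 2) -
          l • (brk (xv 3) (xv 2) * xv 1) } ∧
    xv 1 * assocP (xv 2) (xv 3) (xv 4) - l • (assocP (xv 2) (xv 3) (xv 4) * xv 1) ∈
      TIdealGen { (xv 1 * xv 2) * xv 3 - (xv 1 * xv 3) * xv 2,
        assocP (xv 1) (xv 2) (xv 3) - assocP (xv 2) (xv 1) (xv 3),
        assocP (xv 1) (xv 2) (xv 3) - assocP (xv 1) (xv 3) (xv 2) -
          l • (brk (xv 3) (xv 2) * xv 1) } :=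
  N6_consequences_general h0 (xv 1) (xv 2) (xv 3) (xv 4)
end
end

section
/- Let A and B be two-dimensional Novikov algebras over ℂ, neither of which is associative. Then A and B are isomorphic as ℂ-algebras if and only if Id(A) = Id(B), i.e., if and only if A and B satisfy exactly the same polynomial identities. -/
noncomputable section

/-!
Let `A` be a two-dimensional Novikov algebra that is not associative. A commutative and
right-commutative algebra is associative, so `A` is not commutative and has a basis `e, n` with
`⁅e, n⁆ = n`. The two Novikov identities then give `2 (n w) = ⁅e, n w⁆ + ⁅e w, n⁆` for all `w`,
which forces `e e = a e + b n`, `e n = (a + 1) n`, `n e = a n` and `n n = 0`. A further change of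
basis normalizes `b` in terms of `a` alone, so `a` determines `A` up to isomorphism. Finally, `a`
can be read off the polynomial identities: it is the unique `c` for which
`⁅y, z⁆ x = c ⁅x, ⁅y, z⁆⁆` holds in `A`.
-/

open FreeNonUnitalNonAssocAlgebra Module

section PolynomialIdentities

/-- The set `Id(A)` of polynomial identities of a nonassociative algebra `A` over an arbitrary
commutative semiring `K`, in countably many variables; over `ℂ` this is `IdSet A`. -/
def polynomialIdentities (K A : Type*) [CommSemiring K] [NonUnitalNonAssocSemiring A] [Module K A]
    [IsScalarTower K A A] [SMulCommClass K A A] : Set (FreeNonUnitalNonAssocAlgebra K ℕ) :=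
  {f | ∀ a : ℕ → A, lift K a f = 0}

section Hom

variable {K A B : Type*} [CommSemiring K]
  [NonUnitalNonAssocSemiring A] [Module K A] [IsScalarTower K A A] [SMulCommClass K A A]
  [NonUnitalNonAssocSemiring B] [Module K B] [IsScalarTower K B B] [SMulCommClass K B B]

theorem map_lift_apply {X : Type*} (φ : A →ₙₐ[K] B) (a : X → A)
    (f : FreeNonUnitalNonAssocAlgebra K X) : φ (lift K a f) = lift K (φ ∘ a) f := by
  have h : φ.comp (lift K a) = lift K (φ ∘ a) := (lift_unique K _ _).1 <| by
    rw [NonUnitalAlgHom.coe_comp, Function.comp_assoc, of_comp_lift]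
  exact DFunLike.congr_fun h f

theorem polynomialIdentities_subset_of_injective {φ : A →ₙₐ[K] B} (hφ : Function.Injective φ) :
    polynomialIdentities K B ⊆ polynomialIdentities K A := fun f hf a ↦
  hφ <| by rw [map_lift_apply, hf, map_zero]

theorem polynomialIdentities_subset_of_surjective {φ : A →ₙₐ[K] B} (hφ : Function.Surjective φ) :
    polynomialIdentities K A ⊆ polynomialIdentities K B := fun f hf b ↦ by
  obtain ⟨a, rfl⟩ := hφ.comp_left b
  rw [← map_lift_apply, hf, map_zero]

end Hom

variable {K : Type*} [CommRing K]

/-- The polynomial `⁅y, z⁆ x - c ⁅x, ⁅y, z⁆⁆` in the variables `x = x₀`, `y = x₁`, `z = x₂`,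
which tells non-isomorphic algebras apart. -/
def separatingIdentity (c : K) : FreeNonUnitalNonAssocAlgebra K ℕ :=
  ⁅of K 1, of K 2⁆ * of K 0 - c • ⁅of K 0, ⁅of K 1, of K 2⁆⁆

theorem separatingIdentity_mem_polynomialIdentities_iff {A : Type*} [NonUnitalNonAssocRing A]
    [Module K A] [IsScalarTower K A A] [SMulCommClass K A A] {c : K} :
    separatingIdentity c ∈ polynomialIdentities K A ↔
      ∀ x y z : A, ⁅y, z⁆ * x = c • ⁅x, ⁅y, z⁆⁆ := by
  have lift_eq (a : ℕ → A) :
      lift K a (separatingIdentity c) = ⁅a 1, a 2⁆ * a 0 - c • ⁅a 0, ⁅a 1, a 2⁆⁆ := by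
    simp only [separatingIdentity, Ring.lie_def, map_sub, map_mul, map_smul, lift_of_apply]
  simp only [polynomialIdentities, Set.mem_ofPred_eq, lift_eq, sub_eq_zero]
  exact ⟨fun h x y z ↦ h fun | 0 => x | 1 => y | _ => z, fun h a ↦ h (a 0) (a 1) (a 2)⟩

end PolynomialIdentities

theorem map_mul_of_map_mul_basis {R ι A B : Type*} [CommSemiring R]
    [NonUnitalNonAssocSemiring A] [Module R A] [IsScalarTower R A A] [SMulCommClass R A A]
    [NonUnitalNonAssocSemiring B] [Module R B] [IsScalarTower R B B] [SMulCommClass R B B]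
    (v : Basis ι R A) (f : A →ₗ[R] B) (hf : ∀ i j, f (v i * v j) = f (v i) * f (v j)) (x y : A) :
    f (x * y) = f x * f y := by
  have h : (LinearMap.mul R A).compr₂ f = (LinearMap.mul R B).compl₁₂ f f :=
    v.ext fun i ↦ v.ext fun j ↦ hf i j
  exact LinearMap.congr_fun₂ h x y

section BasisFinTwo

variable {K A : Type*}

theorem exists_basis_fin_two_apply_one_eq [DivisionRing K] [AddCommGroup A] [Module K A]
    (hdim : finrank K A = 2) {x : A} (hx : x ≠ 0) : ∃ v : Basis (Fin 2) K A, v 1 = x := by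
  obtain ⟨y, hxy⟩ := exists_linearIndependent_pair_of_one_lt_finrank (R := K) (by omega) hx
  exact ⟨basisOfLinearIndependentOfCardEqFinrank (LinearIndependent.pair_symm_iff.1 hxy)
    (by simp [hdim]), by simp⟩

theorem exists_basis_smul_add_smul [Field K] [AddCommGroup A] [Module K A]
    (v : Basis (Fin 2) K A) {p q r s : K} (h : p * s ≠ q * r) :
    ∃ w : Basis (Fin 2) K A, w 0 = p • v 0 + q • v 1 ∧ w 1 = r • v 0 + s • v 1 := by
  have hv : LinearIndependent K ![v 0, v 1] := by
    convert v.linearIndependent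
    ext i
    fin_cases i <;> rfl
  have hw := LinearIndependent.pair_add_smul_add_smul_iff p q r s |>.2 ⟨hv, h⟩
  exact ⟨basisOfLinearIndependentOfCardEqFinrank hw (finrank_eq_card_basis v).symm,
    by simp, by simp⟩

variable [NonUnitalNonAssocRing A]

theorem lie_eq_smul_lie_basis [CommRing K] [Module K A] [IsScalarTower K A A]
    [SMulCommClass K A A] (v : Basis (Fin 2) K A) (x y : A) :
    ⁅x, y⁆ = (v.repr x 0 * v.repr y 1 - v.repr x 1 * v.repr y 0) • ⁅v 0, v 1⁆ := by
  conv_lhs => rw [← v.sum_repr x, ← v.sum_repr y]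
  simp only [Fin.sum_univ_two, Ring.lie_def, add_mul, mul_add, smul_mul_assoc, mul_smul_comm]
  module

theorem exists_basis_lie_eq [Field K] [Module K A] [IsScalarTower K A A] [SMulCommClass K A A]
    (hdim : finrank K A = 2) {x y : A} (hxy : ⁅x, y⁆ ≠ 0) :
    ∃ v : Basis (Fin 2) K A, ⁅v 0, v 1⁆ = v 1 := by
  obtain ⟨w, hw⟩ := exists_basis_fin_two_apply_one_eq hdim hxy
  obtain ⟨d, hd⟩ : ∃ d : K, w 1 = d • ⁅w 0, w 1⁆ := ⟨_, hw.trans (lie_eq_smul_lie_basis w x y)⟩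
  have hd0 : d ≠ 0 := by
    rintro rfl
    exact w.ne_zero 1 (by rw [hd, zero_smul])
  obtain ⟨v, hv0, hv1⟩ := exists_basis_smul_add_smul w (p := d) (q := 0) (r := 0) (s := 1)
    (by simpa using hd0)
  refine ⟨v, ?_⟩
  calc ⁅v 0, v 1⁆ = d • ⁅w 0, w 1⁆ := by
        simp only [hv0, hv1, Ring.lie_def, zero_smul, one_smul, add_zero, zero_add,
          smul_mul_assoc, mul_smul_comm, smul_sub]
    _ = v 1 := by rw [← hd, hv1, zero_smul, one_smul, zero_add]

end BasisFinTwo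

section Novikov

/-- Novikov algebras, which need not have a unit: the associator is symmetric in its first two
arguments and right multiplications commute. -/
structure IsNovikov (A : Type*) [NonUnitalNonAssocRing A] : Prop where
  associator_comm (x y z : A) : associator x y z = associator y x z
  mul_right_comm (x y z : A) : x * y * z = x * z * y

namespace IsNovikov

variable {A : Type*} [NonUnitalNonAssocRing A]

theorem exists_lie_ne_zero (hA : IsNovikov A) (hassoc : ¬ ∀ x y z : A, x * y * z = x * (y * z)) :
    ∃ x y : A, ⁅x, y⁆ ≠ 0 := by
  contrapose! hassoc
  have hcomm (x y : A) : x * y = y * x := sub_eq_zero.1 (hassoc x y)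
  intro x y z
  rw [hcomm x y, hA.mul_right_comm, hcomm x]

theorem two_nsmul_mul_eq (hA : IsNovikov A) {e n : A} (hen : ⁅e, n⁆ = n) (w : A) :
    2 • (n * w) = ⁅e, n * w⁆ + ⁅e * w, n⁆ := by
  have h_lsym : e * n * w - e * (n * w) = n * e * w - n * (e * w) := hA.associator_comm e n w
  have h_en : e * n * w = n * w + n * e * w := by
    rw [sub_eq_iff_eq_add.1 (show e * n - n * e = n from hen), add_mul]
  rw [Ring.lie_def, Ring.lie_def, hA.mul_right_comm n w e, hA.mul_right_comm e w n]
  linear_combination (norm := module) h_lsym - (2 : ℤ) • h_en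

end IsNovikov

/-- `v` is a basis `e, n` with the multiplication table `e e = a e + b n`, `e n = (a + 1) n`,
`n e = a n`, `n n = 0`. Such a basis exists in every noncommutative two-dimensional Novikov
algebra over a field of characteristic other than two. -/
structure IsNovikovBasis {K A : Type*} [CommRing K] [NonUnitalNonAssocRing A] [Module K A]
    (v : Basis (Fin 2) K A) (a b : K) : Prop where
  zero_mul_zero : v 0 * v 0 = a • v 0 + b • v 1
  zero_mul_one : v 0 * v 1 = (a + 1) • v 1
  one_mul_zero : v 1 * v 0 = a • v 1
  one_mul_one : v 1 * v 1 = 0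

namespace IsNovikovBasis

variable {K A : Type*} [CommRing K] [NonUnitalNonAssocRing A] [Module K A]
  {v : Basis (Fin 2) K A} {a b : K}

theorem lie_eq (h : IsNovikovBasis v a b) : ⁅v 0, v 1⁆ = v 1 := by
  rw [Ring.lie_def, h.zero_mul_one, h.one_mul_zero]
  module

theorem one_mul [SMulCommClass K A A] (h : IsNovikovBasis v a b) (x : A) :
    v 1 * x = (a * v.repr x 0) • v 1 := by
  conv_lhs => rw [← v.sum_repr x]
  simp only [Fin.sum_univ_two, mul_add, mul_smul_comm, h.one_mul_zero, h.one_mul_one]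
  module

variable [IsScalarTower K A A] [SMulCommClass K A A]

theorem mul_assoc_of_neg_one_of_zero (h : IsNovikovBasis v (-1) 0) (x y z : A) :
    x * y * z = x * (y * z) := by
  have mul_eq (x y : A) : x * y = -v.repr y 0 • x := by
    conv_lhs => rw [← v.sum_repr x, ← v.sum_repr y]
    conv_rhs => rw [← v.sum_repr x]
    simp only [Fin.sum_univ_two, add_mul, mul_add, smul_mul_assoc, mul_smul_comm,
      h.zero_mul_zero, h.zero_mul_one, h.one_mul_zero, h.one_mul_one]
    module
  rw [mul_eq (x * y) z, mul_eq y z, mul_smul_comm]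

theorem separatingIdentity_mem_iff (h : IsNovikovBasis v a b) {c : K} :
    separatingIdentity c ∈ polynomialIdentities K A ↔ c = a := by
  rw [separatingIdentity_mem_polynomialIdentities_iff]
  constructor
  · intro hc
    have h_one : a • v 1 = c • v 1 := by
      simpa only [h.lie_eq, h.one_mul_zero] using hc (v 0) (v 0) (v 1)
    simpa using congrArg (v.repr · 1) h_one.symm
  · rintro rfl x y z
    obtain ⟨d, hd⟩ : ∃ d : K, ⁅y, z⁆ = d • v 1 := ⟨_, h.lie_eq ▸ lie_eq_smul_lie_basis v y z⟩
    have h_lie : ⁅x, d • v 1⁆ = (v.repr x 0 * d) • v 1 := by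
      rw [lie_eq_smul_lie_basis v, h.lie_eq]
      simp
    rw [hd, h_lie, smul_mul_assoc, h.one_mul]
    module

theorem exists_bijective_hom {B : Type*} [NonUnitalNonAssocRing B] [Module K B]
    [IsScalarTower K B B] [SMulCommClass K B B] {w : Basis (Fin 2) K B}
    (hv : IsNovikovBasis v a b) (hw : IsNovikovBasis w a b) :
    ∃ φ : A →ₙₐ[K] B, Function.Bijective φ := by
  let f : A ≃ₗ[K] B := v.equiv w (Equiv.refl _)
  have hf : ∀ i, f (v i) = w i := fun i ↦ v.equiv_apply i w (Equiv.refl _)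
  have map_mul : ∀ x y, f (x * y) = f x * f y := by
    refine map_mul_of_map_mul_basis v f.toLinearMap fun i j ↦ ?_
    fin_cases i <;> fin_cases j <;>
      simp [hf, hv.zero_mul_zero, hv.zero_mul_one, hv.one_mul_zero, hv.one_mul_one,
        hw.zero_mul_zero, hw.zero_mul_one, hw.one_mul_zero, hw.one_mul_one]
  exact ⟨{ f.toLinearMap with map_zero' := map_zero f, map_mul' := map_mul }, f.bijective⟩

end IsNovikovBasis

variable {K A B : Type*} [Field K]
  [NonUnitalNonAssocRing A] [Module K A] [IsScalarTower K A A] [SMulCommClass K A A]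
  [NonUnitalNonAssocRing B] [Module K B] [IsScalarTower K B B] [SMulCommClass K B B]

namespace IsNovikov

theorem basis_one_mul [NeZero (2 : K)] (hA : IsNovikov A) {v : Basis (Fin 2) K A}
    (hv : ⁅v 0, v 1⁆ = v 1) (w : A) : v 1 * w = v.repr (v 0 * w) 0 • v 1 := by
  have h : (2 : K) • (v 1 * w) = (v.repr (v 1 * w) 1 + v.repr (v 0 * w) 0) • v 1 := by
    rw [ofNat_smul_eq_nsmul, hA.two_nsmul_mul_eq hv, lie_eq_smul_lie_basis v (v 0),
      lie_eq_smul_lie_basis v (v 0 * w), hv, ← add_smul]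
    simp
  have h₀ : v.repr (v 1 * w) 0 = 0 := by
    simpa [two_ne_zero] using congrArg (v.repr · 0) h
  have h₁ : v.repr (v 1 * w) 1 = v.repr (v 0 * w) 0 := by
    simpa [two_mul] using congrArg (v.repr · 1) h
  rw [← v.sum_repr (v 1 * w), Fin.sum_univ_two, h₀, h₁, zero_smul, zero_add]

theorem isNovikovBasis_of_lie_eq [NeZero (2 : K)] (hA : IsNovikov A) {v : Basis (Fin 2) K A}
    (hv : ⁅v 0, v 1⁆ = v 1) :
    IsNovikovBasis v (v.repr (v 0 * v 0) 0) (v.repr (v 0 * v 0) 1) := by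
  have h₁₀ : v 1 * v 0 = v.repr (v 0 * v 0) 0 • v 1 := hA.basis_one_mul hv (v 0)
  have h₀₁ : v 0 * v 1 = (v.repr (v 0 * v 0) 0 + 1) • v 1 := by
    rw [sub_eq_iff_eq_add.1 (show v 0 * v 1 - v 1 * v 0 = v 1 from hv), h₁₀]
    module
  refine ⟨?_, h₀₁, h₁₀, ?_⟩
  · rw [← Fin.sum_univ_two fun i ↦ v.repr (v 0 * v 0) i • v i, v.sum_repr]
  · rw [hA.basis_one_mul hv (v 1), h₀₁]
    simp

end IsNovikov

namespace IsNovikovBasis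

variable {v : Basis (Fin 2) K A} {a b : K}

/-- Here `s` and `c` parametrize the change of basis from `e, n` to `e + c n, s n`. -/
theorem exists_isNovikovBasis_of_mul_eq (h : IsNovikovBasis v a b) {b' s c : K} (hs : s ≠ 0)
    (hb' : s * b' = b + c * (a + 1)) : ∃ v' : Basis (Fin 2) K A, IsNovikovBasis v' a b' := by
  obtain ⟨v', h₀, h₁⟩ := exists_basis_smul_add_smul v (p := 1) (q := c) (r := 0) (s := s)
    (by simpa using hs)
  rw [one_smul] at h₀
  rw [zero_smul, zero_add] at h₁
  refine ⟨v', ?_, ?_, ?_, ?_⟩ <;>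
    simp only [h₀, h₁, add_mul, mul_add, smul_mul_assoc, mul_smul_comm,
      h.zero_mul_zero, h.zero_mul_one, h.one_mul_zero, h.one_mul_one]
  · linear_combination (norm := module) -hb' • v 1
  all_goals module

open Classical in
theorem exists_isNovikovBasis_ite (h : IsNovikovBasis v a b)
    (hassoc : ¬ ∀ x y z : A, x * y * z = x * (y * z)) :
    ∃ v' : Basis (Fin 2) K A, IsNovikovBasis v' a (if a = -1 then 1 else 0) := by
  split_ifs with ha
  · subst ha
    have hb : b ≠ 0 := by
      rintro rfl
      exact hassoc h.mul_assoc_of_neg_one_of_zero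
    exact h.exists_isNovikovBasis_of_mul_eq (c := 0) hb (by ring)
  · have ha' : a + 1 ≠ 0 := fun h ↦ ha (eq_neg_of_add_eq_zero_left h)
    exact h.exists_isNovikovBasis_of_mul_eq (c := -b / (a + 1)) one_ne_zero (by field_simp; ring)

end IsNovikovBasis

open Classical in
theorem IsNovikov.exists_isNovikovBasis [NeZero (2 : K)] (hdim : finrank K A = 2)
    (hA : IsNovikov A) (hassoc : ¬ ∀ x y z : A, x * y * z = x * (y * z)) :
    ∃ (v : Basis (Fin 2) K A) (a : K), IsNovikovBasis v a (if a = -1 then 1 else 0) := by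
  obtain ⟨x, y, hxy⟩ := hA.exists_lie_ne_zero hassoc
  obtain ⟨v, hv⟩ := exists_basis_lie_eq hdim hxy
  obtain ⟨v', hv'⟩ := (hA.isNovikovBasis_of_lie_eq hv).exists_isNovikovBasis_ite hassoc
  exact ⟨v', _, hv'⟩

theorem novikov_dim2_isomorphic_iff_same_identities_general [NeZero (2 : K)]
    (hdimA : finrank K A = 2) (hdimB : finrank K B = 2) (hA : IsNovikov A) (hB : IsNovikov B)
    (hA_nonassoc : ¬ ∀ x y z : A, x * y * z = x * (y * z))
    (hB_nonassoc : ¬ ∀ x y z : B, x * y * z = x * (y * z)) :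
    [∃ φ : A →ₙₐ[K] B, Function.Bijective φ,
      polynomialIdentities K A = polynomialIdentities K B,
      polynomialIdentities K A ⊆ polynomialIdentities K B].TFAE := by
  tfae_have 1 → 2 := fun ⟨_, hφ⟩ ↦ (polynomialIdentities_subset_of_surjective hφ.2).antisymm
    (polynomialIdentities_subset_of_injective hφ.1)
  tfae_have 2 → 3 := Eq.subset
  tfae_have 3 → 1 := by
    intro h_sub
    obtain ⟨v, a, hv⟩ := hA.exists_isNovikovBasis hdimA hA_nonassoc
    obtain ⟨w, b, hw⟩ := hB.exists_isNovikovBasis hdimB hB_nonassoc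
    obtain rfl : a = b := hw.separatingIdentity_mem_iff.1 <|
      h_sub <| hv.separatingIdentity_mem_iff.2 rfl
    exact hv.exists_bijective_hom hw
  tfae_finish

end Novikov

/-- Two-dimensional Novikov `ℂ`-algebras that are not associative are
isomorphic if and only if they satisfy the same polynomial identities. -/
theorem novikov_dim2_isomorphic_iff_same_identities
    (A : Type) [NonUnitalNonAssocRing A] [Module ℂ A]
    [IsScalarTower ℂ A A] [SMulCommClass ℂ A A]
    (B : Type) [NonUnitalNonAssocRing B] [Module ℂ B]
    [IsScalarTower ℂ B B] [SMulCommClass ℂ B B]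
    (hdimA : Module.finrank ℂ A = 2) (hdimB : Module.finrank ℂ B = 2)
    (hA_lsym : ∀ x y z : A, (x * y) * z - x * (y * z) = (y * x) * z - y * (x * z))
    (hA_rcom : ∀ x y z : A, (x * y) * z = (x * z) * y)
    (hB_lsym : ∀ x y z : B, (x * y) * z - x * (y * z) = (y * x) * z - y * (x * z))
    (hB_rcom : ∀ x y z : B, (x * y) * z = (x * z) * y)
    (hA_nonassoc : ¬ ∀ x y z : A, (x * y) * z = x * (y * z))
    (hB_nonassoc : ¬ ∀ x y z : B, (x * y) * z = x * (y * z)) :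
    (∃ φ : A →ₙₐ[ℂ] B, Function.Bijective φ) ↔ IdSet A = IdSet B :=
  (novikov_dim2_isomorphic_iff_same_identities_general hdimA hdimB ⟨hA_lsym, hA_rcom⟩
    ⟨hB_lsym, hB_rcom⟩ hA_nonassoc hB_nonassoc).out 0 1
end
end

section
/- Let A be a two-dimensional Novikov algebra over ℂ and let f = f(x₁,…,xₙ) ∈ ℂ⟨X⟩ be a multilinear polynomial (a ℂ-linear combination of monomials in which each of x₁,…,xₙ occurs exactly once). Then the image f(A) = {f(a₁,…,aₙ) : a₁,…,aₙ ∈ A} is a ℂ-linear subspace of A. -/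
noncomputable section

/-- the multiset of variable indices (with multiplicity) of a nonassociative monomial. -/
def leaves : FreeMagma ℕ → Multiset ℕ
  | .of i => {i}
  | .mul a b => leaves a + leaves b

/-- the monomial of `ℂ⟨X⟩` corresponding to an element of the free magma on the variables. -/
def magmaMono : FreeMagma ℕ → FreeA
  | .of i => xv i
  | .mul a b => magmaMono a * magmaMono b

/-- `Pₙ`: the `ℂ`-span of the multilinear monomials in `x₁, …, xₙ`, i.e. of all
products (with arbitrary bracketing and order) in which each of `x₁, …, xₙ`
occurs exactly once. -/
def Pn (n : ℕ) : Submodule ℂ FreeA :=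
  Submodule.span ℂ
    {f | ∃ m : FreeMagma ℕ, leaves m = (Finset.Icc 1 n).val ∧ f = magmaMono m}

/-- the image `f(A) = {f(a₁, a₂, …) : aᵢ ∈ A}` of the algebra `A` with respect
to `f ∈ ℂ⟨X⟩`. -/
def polyImage (A : Type) [NonUnitalNonAssocSemiring A] [Module ℂ A]
    [IsScalarTower ℂ A A] [SMulCommClass ℂ A A] (f : FreeA) : Set A :=
  {v | ∃ a : ℕ → A, FreeNonUnitalNonAssocAlgebra.lift ℂ a f = v}

/-!
Evaluating a multilinear polynomial of positive degree gives a multilinear map `g`. Its image is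
contained in a line as soon as changing a single coordinate never leads from a nonzero value `g a`
out of the line through `g a`: two nonzero values can be joined by a chain of nonzero values of
which consecutive ones are attained at points differing in one coordinate, because no module is the
union of two proper submodules. Otherwise some `g (Function.update a i ·)`, which is a linear map,
has two linearly independent values, so it is onto when the codomain has dimension two. In both
cases the image of `g` is the range of a linear map obtained by fixing all coordinates but one.
-/

section Multilinear

theorem exists_apply_ne_zero_and_apply_ne_zero {F G M N P : Type*}
    [AddZeroClass M] [AddZeroClass N] [AddZeroClass P]
    [FunLike F M N] [AddMonoidHomClass F M N] [FunLike G M P] [AddMonoidHomClass G M P]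
    {f : F} {g : G} (hf : ∃ x, f x ≠ 0) (hg : ∃ y, g y ≠ 0) :
    ∃ z, f z ≠ 0 ∧ g z ≠ 0 := by
  obtain ⟨x, hx⟩ := hf
  obtain ⟨y, hy⟩ := hg
  by_cases hgx : g x = 0
  · by_cases hfy : f y = 0
    · exact ⟨x + y, by rwa [map_add, hfy, add_zero], by rwa [map_add, hgx, zero_add]⟩
    · exact ⟨y, hfy, hy⟩
  · exact ⟨x, hx, hgx⟩

theorem eq_top_of_notMem_span_singleton_of_rank_le_two {K V : Type*} [DivisionRing K]
    [AddCommGroup V] [Module K V] (hV : Module.rank K V ≤ 2)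
    {S : Submodule K V} {v w : V} (hv : v ≠ 0) (hvS : v ∈ S) (hwS : w ∈ S)
    (hw : w ∉ Submodule.span K {v}) : S = ⊤ := by
  have : Module.Finite K V :=
    Module.rank_lt_aleph0_iff.mp (hV.trans_lt Cardinal.ofNat_lt_aleph0)
  have hfin : Module.finrank K V ≤ 2 := Module.finrank_le_of_rank_le hV
  have hlt : Submodule.span K {v} < S :=
    SetLike.lt_iff_le_and_exists.mpr
      ⟨(Submodule.span_singleton_le_iff_mem v S).mpr hvS, w, hwS, hw⟩
  have hS : 1 < Module.finrank K S := by
    simpa only [finrank_span_singleton hv] using Submodule.finrank_lt_finrank_of_lt hlt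
  exact Submodule.eq_top_of_finrank_eq (le_antisymm S.finrank_le (hfin.trans hS))

variable {ι : Type*} [DecidableEq ι] {M : ι → Type*} {V : Type*}

theorem apply_mem_span_singleton_of_apply_update_mem {R : Type*} [Semiring R]
    [∀ i, AddCommMonoid (M i)] [∀ i, Module R (M i)] [AddCommMonoid V] [Module R V]
    {g : MultilinearMap R M V}
    (hg : ∀ a i x, g a ≠ 0 → g (Function.update a i x) ∈ Submodule.span R {g a})
    {s : Finset ι} {a b : ∀ i, M i} (hab : ∀ i ∉ s, a i = b i) (ha : g a ≠ 0) :
    g b ∈ Submodule.span R {g a} := by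
  induction s using Finset.induction_on generalizing a b with
  | empty =>
    rw [funext fun i => hab i (Finset.notMem_empty i)]
    exact Submodule.mem_span_singleton_self _
  | insert i s _ ih =>
    by_cases hb : g b = 0
    · rw [hb]
      exact Submodule.zero_mem _
    obtain ⟨z, haz, hbz⟩ : ∃ z, g.toLinearMap a i z ≠ 0 ∧ g.toLinearMap b i z ≠ 0 :=
      exists_apply_ne_zero_and_apply_ne_zero ⟨a i, by simpa⟩ ⟨b i, by simpa⟩
    have from_a : g (Function.update a i z) ∈ Submodule.span R {g a} := hg a i z ha
    have across : g (Function.update b i z) ∈ Submodule.span R {g (Function.update a i z)} := by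
      refine ih (fun j hj => ?_) haz
      obtain rfl | hji := eq_or_ne j i
      · simp
      · simpa [hji] using hab j (by simp [hji, hj])
    have to_b : g b ∈ Submodule.span R {g (Function.update b i z)} := by
      simpa using hg (Function.update b i z) i (b i) hbz
    rw [← Submodule.span_singleton_le_iff_mem] at from_a across to_b ⊢
    exact to_b.trans (across.trans from_a)

theorem exists_coe_range_toLinearMap_eq_range {K : Type*} [DivisionRing K]
    [∀ i, AddCommMonoid (M i)] [∀ i, Module K (M i)] [AddCommGroup V] [Module K V]
    [Finite ι] [Nonempty ι] (hV : Module.rank K V ≤ 2) (g : MultilinearMap K M V) :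
    ∃ a i, (LinearMap.range (g.toLinearMap a i) : Set V) = Set.range g := by
  have apply_mem (a i) : g a ∈ LinearMap.range (g.toLinearMap a i) := ⟨a i, by simp⟩
  suffices h : ∃ a i, ∀ b, g b ∈ LinearMap.range (g.toLinearMap a i) by
    obtain ⟨a, i, h⟩ := h
    exact ⟨a, i, Set.Subset.antisymm (Set.range_comp_subset_range (Function.update a i) g)
      (Set.range_subset_iff.mpr h)⟩
  by_cases hg : ∀ a i x, g a ≠ 0 → g (Function.update a i x) ∈ Submodule.span K {g a}
  · have := Fintype.ofFinite ι
    have i : ι := Classical.arbitrary ι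
    by_cases h0 : ∀ b, g b = 0
    · exact ⟨0, i, fun b => h0 b ▸ Submodule.zero_mem _⟩
    obtain ⟨a, ha⟩ := not_forall.mp h0
    exact ⟨a, i, fun b => (Submodule.span_singleton_le_iff_mem _ _).mpr (apply_mem a i)
      (apply_mem_span_singleton_of_apply_update_mem (s := Finset.univ) hg (by simp) ha)⟩
  · push Not at hg
    obtain ⟨a, i, x, ha, hx⟩ := hg
    have htop : LinearMap.range (g.toLinearMap a i) = ⊤ :=
      eq_top_of_notMem_span_singleton_of_rank_le_two hV ha (apply_mem a i) ⟨x, rfl⟩ hx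
    exact ⟨a, i, fun b => htop ▸ Submodule.mem_top⟩

end Multilinear

theorem leaves_ne_zero (m : FreeMagma ℕ) : leaves m ≠ 0 := by
  induction m with
  | ih1 i => exact Multiset.singleton_ne_zero i
  | ih2 p q hp _ => exact fun h => hp (add_eq_zero.mp h).1

theorem Pn_zero : Pn 0 = ⊥ := by
  rw [Pn, Submodule.span_eq_bot]
  rintro _ ⟨m, hm, rfl⟩
  exact absurd hm (leaves_ne_zero m)

section Evaluation

open FreeNonUnitalNonAssocAlgebra (lift lift_of_apply)

variable {A : Type*} [NonUnitalNonAssocSemiring A] [Module ℂ A]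
  [IsScalarTower ℂ A A] [SMulCommClass ℂ A A]

theorem exists_multilinearMap_eq_lift_magmaMono (m : FreeMagma ℕ) {s : Finset ℕ}
    (hs : leaves m = s.val) : ∃ g : MultilinearMap ℂ (fun _ : s => A) A,
      ∀ a : ℕ → A, g (s.restrict a) = lift ℂ a (magmaMono m) := by
  induction m generalizing s with
  | ih1 i =>
    obtain rfl : {i} = s := Finset.val_injective hs
    refine ⟨MultilinearMap.ofSubsingleton ℂ A A ⟨i, Finset.mem_singleton_self i⟩ LinearMap.id,
      fun a => ?_⟩
    exact (lift_of_apply ℂ a i).symm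
  | ih2 p q hp hq =>
    have hadd : leaves p + leaves q = s.val := hs
    obtain ⟨hpn, hqn, hpq⟩ := Multiset.nodup_add.mp (hadd ▸ s.nodup)
    let t : Finset ℕ := ⟨leaves p, hpn⟩
    let u : Finset ℕ := ⟨leaves q, hqn⟩
    have htu : Disjoint t u := Finset.disjoint_val.mp hpq
    obtain rfl : t ∪ u = s := by
      rw [← Finset.disjUnion_eq_union t u htu]
      exact Finset.val_injective hadd
    obtain ⟨g, hg⟩ := hp (s := t) rfl
    obtain ⟨h, hh⟩ := hq (s := u) rfl
    refine ⟨((LinearMap.mul' ℂ A).compMultilinearMap (g.domCoprod h)).domDomCongr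
      (Equiv.Finset.union t u htu), fun a => ?_⟩
    calc _ = g (t.restrict a) * h (u.restrict a) := rfl
      _ = lift ℂ a (magmaMono p) * lift ℂ a (magmaMono q) := by rw [hg, hh]
      _ = lift ℂ a (magmaMono p * magmaMono q) := (map_mul _ _ _).symm

theorem exists_multilinearMap_eq_lift {n : ℕ} {f : FreeA} (hf : f ∈ Pn n) :
    ∃ g : MultilinearMap ℂ (fun _ : Finset.Icc 1 n => A) A,
      ∀ a : ℕ → A, g ((Finset.Icc 1 n).restrict a) = lift ℂ a f := by
  rw [Pn] at hf
  induction hf using Submodule.span_induction with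
  | mem f hf =>
    obtain ⟨m, hm, rfl⟩ := hf
    exact exists_multilinearMap_eq_lift_magmaMono m hm
  | zero => exact ⟨0, fun a => by simp⟩
  | add f₁ f₂ _ _ h₁ h₂ =>
    obtain ⟨g₁, hg₁⟩ := h₁
    obtain ⟨g₂, hg₂⟩ := h₂
    exact ⟨g₁ + g₂, fun a => by simp [hg₁, hg₂]⟩
  | smul c f _ h =>
    obtain ⟨g, hg⟩ := h
    exact ⟨c • g, fun a => by simp [hg]⟩

end Evaluation

theorem exists_multilinearMap_range_eq_polyImage {A : Type} [NonUnitalNonAssocSemiring A]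
    [Module ℂ A] [IsScalarTower ℂ A A] [SMulCommClass ℂ A A] {n : ℕ} {f : FreeA} (hf : f ∈ Pn n) :
    ∃ g : MultilinearMap ℂ (fun _ : Finset.Icc 1 n => A) A, Set.range g = polyImage A f := by
  obtain ⟨g, hg⟩ := exists_multilinearMap_eq_lift (A := A) hf
  have hrestrict : Function.Surjective ((Finset.Icc 1 n).restrict (π := fun _ => A)) :=
    Subtype.val_injective.surjective_comp_right
  refine ⟨g, ?_⟩
  rw [← hrestrict.range_comp g]
  exact congrArg Set.range (funext hg)

theorem novikov_dim2_multilinear_image_is_subspace_general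
    (A : Type) [NonUnitalNonAssocRing A] [Module ℂ A]
    [IsScalarTower ℂ A A] [SMulCommClass ℂ A A]
    (hrank : Module.rank ℂ A ≤ 2) (n : ℕ) (f : FreeA) (hf : f ∈ Pn n) :
    ∃ S : Submodule ℂ A, (S : Set A) = polyImage A f := by
  obtain rfl | hn := n.eq_zero_or_pos
  · obtain rfl : f = 0 := by rwa [Pn_zero, Submodule.mem_bot] at hf
    exact ⟨⊥, by simp [polyImage, eq_comm]⟩
  have : Nonempty (Finset.Icc 1 n) := ⟨⟨1, Finset.mem_Icc.mpr ⟨le_rfl, hn⟩⟩⟩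
  obtain ⟨g, hg⟩ := exists_multilinearMap_range_eq_polyImage (A := A) hf
  obtain ⟨a, i, hrange⟩ := exists_coe_range_toLinearMap_eq_range hrank g
  exact ⟨LinearMap.range (g.toLinearMap a i), hrange.trans hg⟩

/-- The image of a two-dimensional Novikov `ℂ`-algebra with respect to any
multilinear polynomial (an element of `Pₙ`, the span of the multilinear
monomials in `x₁, …, xₙ`) is a `ℂ`-linear subspace. -/
theorem novikov_dim2_multilinear_image_is_subspace
    (A : Type) [NonUnitalNonAssocRing A] [Module ℂ A]
    [IsScalarTower ℂ A A] [SMulCommClass ℂ A A]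
    (hdim : Module.finrank ℂ A = 2)
    (h_lsym : ∀ x y z : A, (x * y) * z - x * (y * z) = (y * x) * z - y * (x * z))
    (h_rcom : ∀ x y z : A, (x * y) * z = (x * z) * y)
    (n : ℕ) (f : FreeA) (hf : f ∈ Pn n) :
    ∃ S : Submodule ℂ A, (S : Set A) = polyImage A f :=
  novikov_dim2_multilinear_image_is_subspace_general A
    (Module.rank_eq_ofNat_iff_finrank_eq_ofNat 2 |>.mpr hdim).le n f hf
end
end
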